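/- arXiv:2512.23174 — 9 statements merged into one kernel-verified Lean document; each statement's English description precedes it below -/
import Mathlib

section
/- Let q ∈ ℂ be nonzero, let ξ₁, ξ₂, Q₊, Q₋, Λ : ℂ \ {0} → ℂ be functions, and let z ∈ ℂ \ {0} satisfy Q₊(z) ≠ 0 and Q₊(qz) ≠ 0. Define the 2×2 complex matrices v(w) = [[Q₊(w), Q₋(w)], [0, Q₊(w)⁻¹]] (for w with Q₊(w) ≠ 0) and Z(z) = diag(ξ₁(z), ξ₂(z)). Then v(qz)·Z(z)·v(z)⁻¹ = [[ξ₁(z)Q₊(qz)/Q₊(z), ξ₂(z)Q₊(z)Q₋(qz) − ξ₁(z)Q₋(z)Q₊(qz)], [0, ξ₂(z)Q₊(z)/Q₊(qz)]]. Consequently, the Miura q-oper connection A(z) = [[ξ₁(z)Q₊(qz)/Q₊(z), Λ(z)], [0, ξ₂(z)Q₊(z)/Q₊(qz)]] satisfies the generalized Z-twisted condition A(z) = v(qz)Z(z)v(z)⁻¹ at z if and only if the GL(2) QQ-relation ξ₂(z)Q₊(z)Q₋(qz) − ξ₁(z)Q₋(z)Q₊(qz) = Λ(z) holds at z. -/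
open Matrix

/-- The upper-triangular gauge transformation `v(w) = [[Q₊(w), Q₋(w)], [0, Q₊(w)⁻¹]]`. -/
noncomputable def vGauge (Qp Qm : ℂ → ℂ) (w : ℂ) : Matrix (Fin 2) (Fin 2) ℂ :=
  !![Qp w, Qm w; 0, (Qp w)⁻¹]

/-- The diagonal twist `Z(z) = diag(ξ₁(z), ξ₂(z))`. -/
noncomputable def Ztwist (ξ₁ ξ₂ : ℂ → ℂ) (z : ℂ) : Matrix (Fin 2) (Fin 2) ℂ :=
  !![ξ₁ z, 0; 0, ξ₂ z]

/-- explicit form of `v(qz)·Z(z)·v(z)⁻¹`, and the Miura q-oper connection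
satisfies the generalized Z-twisted condition at `z` iff the GL(2) QQ-relation holds at `z`. -/
theorem stmt_1 (q : ℂ) (hq : q ≠ 0) (ξ₁ ξ₂ Qp Qm Lam : ℂ → ℂ)
    (z : ℂ) (hz : z ≠ 0) (h1 : Qp z ≠ 0) (h2 : Qp (q * z) ≠ 0) :
    (vGauge Qp Qm (q * z) * Ztwist ξ₁ ξ₂ z * (vGauge Qp Qm z)⁻¹ =
      !![ξ₁ z * Qp (q * z) / Qp z,
         ξ₂ z * Qp z * Qm (q * z) - ξ₁ z * Qm z * Qp (q * z);
         0, ξ₂ z * Qp z / Qp (q * z)]) ∧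
    ((!![ξ₁ z * Qp (q * z) / Qp z, Lam z; 0, ξ₂ z * Qp z / Qp (q * z)] =
        vGauge Qp Qm (q * z) * Ztwist ξ₁ ξ₂ z * (vGauge Qp Qm z)⁻¹) ↔
      ξ₂ z * Qp z * Qm (q * z) - ξ₁ z * Qm z * Qp (q * z) = Lam z) := by
  have hinv : (vGauge Qp Qm z)⁻¹ = !![(Qp z)⁻¹, -Qm z; 0, Qp z] := by
    apply Matrix.inv_eq_right_inv
    ext i j
    fin_cases i <;> fin_cases j <;>
      simp [vGauge, Matrix.mul_apply, Fin.sum_univ_two, h1] <;> ring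
  have key : vGauge Qp Qm (q * z) * Ztwist ξ₁ ξ₂ z * (vGauge Qp Qm z)⁻¹ =
      !![ξ₁ z * Qp (q * z) / Qp z,
         ξ₂ z * Qp z * Qm (q * z) - ξ₁ z * Qm z * Qp (q * z);
         0, ξ₂ z * Qp z / Qp (q * z)] := by
    rw [hinv]
    ext i j
    fin_cases i <;> fin_cases j <;>
      simp [vGauge, Ztwist, Matrix.mul_apply, Fin.sum_univ_two] <;> ring
  refine ⟨key, ?_⟩
  rw [key]
  constructor
  · intro h
    have h01 := congrFun (congrFun h 0) 1
    simpa using h01.symm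
  · intro h
    rw [h]
end

section
/- Let q ∈ ℂ be nonzero and let ξ₁, ξ₂, Q₊, Q₋, Λ : ℂ \ {0} → ℂ be functions satisfying the GL(2) QQ-relation ξ₂(z)Q₊(z)Q₋(qz) − ξ₁(z)Q₋(z)Q₊(qz) = Λ(z) at z = s and at z = q⁻¹s, where s ∈ ℂ \ {0}. If Q₊(s) = 0 and Λ(s) ≠ 0, then the XXZ Bethe Ansatz relation −ξ₁(s)·Q₊(qs)·Λ(q⁻¹s) = ξ₂(q⁻¹s)·Q₊(q⁻¹s)·Λ(s) holds; in particular, if moreover ξ₂(q⁻¹s), Q₊(q⁻¹s), and Λ(s) are all nonzero, then −(ξ₁(s)/ξ₂(q⁻¹s))·(Q₊(qs)/Q₊(q⁻¹s))·(Λ(q⁻¹s)/Λ(s)) = 1. -/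
/-- evaluating the GL(2) QQ-relation at a root `s` of `Q₊` and at `q⁻¹s`
yields the generalized gl₂ XXZ Bethe Ansatz relation. -/
theorem stmt_3 (q : ℂ) (hq : q ≠ 0) (ξ₁ ξ₂ Qp Qm Lam : ℂ → ℂ) (s : ℂ) (hs : s ≠ 0)
    (h1 : ξ₂ s * Qp s * Qm (q * s) - ξ₁ s * Qm s * Qp (q * s) = Lam s)
    (h2 : ξ₂ (q⁻¹ * s) * Qp (q⁻¹ * s) * Qm s - ξ₁ (q⁻¹ * s) * Qm (q⁻¹ * s) * Qp s
      = Lam (q⁻¹ * s))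
    (h0 : Qp s = 0) (hΛ : Lam s ≠ 0) :
    -(ξ₁ s * Qp (q * s) * Lam (q⁻¹ * s)) = ξ₂ (q⁻¹ * s) * Qp (q⁻¹ * s) * Lam s ∧
    (ξ₂ (q⁻¹ * s) ≠ 0 → Qp (q⁻¹ * s) ≠ 0 →
      -(ξ₁ s / ξ₂ (q⁻¹ * s) * (Qp (q * s) / Qp (q⁻¹ * s)) * (Lam (q⁻¹ * s) / Lam s)) = 1) := by
  have key : -(ξ₁ s * Qp (q * s) * Lam (q⁻¹ * s)) = ξ₂ (q⁻¹ * s) * Qp (q⁻¹ * s) * Lam s := by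
    rw [← h1, ← h2, h0]
    ring
  refine ⟨key, fun hx hp => ?_⟩
  have e : -(ξ₁ s / ξ₂ (q⁻¹ * s) * (Qp (q * s) / Qp (q⁻¹ * s)) * (Lam (q⁻¹ * s) / Lam s))
      = -(ξ₁ s * Qp (q * s) * Lam (q⁻¹ * s)) / (ξ₂ (q⁻¹ * s) * Qp (q⁻¹ * s) * Lam s) := by
    rw [div_mul_div_comm, div_mul_div_comm, neg_div]
  rw [e, key]
  exact div_self (mul_ne_zero (mul_ne_zero hx hp) hΛ)
end

section
/- Let q, μ, μ̃, γ ∈ ℂ be nonzero, let a₁, …, aₙ ∈ ℂ \ {0}, s₁, …, s_k ∈ ℂ \ {0}, and fix 1 ≤ i ≤ k. Define ξ₁(z) = q(z−μ)(z−μ̃)/(qz²−1), ξ₂(z) = (qμz−1)(qμ̃z−1)/(qz²−1), Q₊(z) = ∏_{j=1}^{k}(z−s_j)(1/z−s_j), and Λ(z) = γ∏_{l=1}^{n}(z−a_l)(1/(qz)−a_l). Assume that every factor occurring in a denominator below is nonzero (in particular q s_i² ≠ 1, s_i² ≠ q, (μs_i−1)(μ̃s_i−1) ≠ 0, s_i ≠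 q s_j, s_i s_j ≠ q, a_l ≠ s_i, a_l q s_i ≠ 1 for all j, l). Then the Bethe relation −ξ₁(s_i)·Q₊(q s_i)·Λ(q⁻¹ s_i) = ξ₂(q⁻¹ s_i)·Q₊(q⁻¹ s_i)·Λ(s_i) holds if and only if ((s_i²−q)/(q s_i²−1)) · ((s_i−μ)(s_i−μ̃)/((μ s_i−1)(μ̃ s_i−1))) · ∏_{j=1}^{k} ((q s_i−s_j)(q s_i s_j−1)/((s_i−q s_j)(s_i s_j−q))) · ∏_{l=1}^{n} ((a_l s_i−1)(a_l q−s_i)/((a_l−s_i)(a_l q s_i−1))) = −1. -/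
/-- the Bethe relation for reflection-invariant generalized Z-twisted
(GL(2),q)-opers with constant asymptotics is equivalent to Sklyanin's open gl₂ XXZ
Bethe equations with diagonal boundary conditions. -/
theorem stmt_5 (q μ μt γ : ℂ) (hq : q ≠ 0) (hμ : μ ≠ 0) (hμt : μt ≠ 0) (hγ : γ ≠ 0)
    (n k : ℕ) (a : Fin n → ℂ) (s : Fin k → ℂ)
    (ha : ∀ l, a l ≠ 0) (hs : ∀ j, s j ≠ 0) (i : Fin k)
    (h1 : q * s i ^ 2 - 1 ≠ 0) (h2 : s i ^ 2 - q ≠ 0)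
    (h3 : μ * s i - 1 ≠ 0) (h4 : μt * s i - 1 ≠ 0)
    (h5 : ∀ j, s i - q * s j ≠ 0) (h6 : ∀ j, s i * s j - q ≠ 0)
    (h7 : ∀ l, a l - s i ≠ 0) (h8 : ∀ l, a l * q * s i - 1 ≠ 0) :
    (let ξ₁ : ℂ → ℂ := fun w => q * (w - μ) * (w - μt) / (q * w ^ 2 - 1);
     let ξ₂ : ℂ → ℂ := fun w => (q * μ * w - 1) * (q * μt * w - 1) / (q * w ^ 2 - 1);
     let Qp : ℂ → ℂ := fun w => ∏ j, (w - s j) * (w⁻¹ - s j);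
     let Lam : ℂ → ℂ := fun w => γ * ∏ l, (w - a l) * ((q * w)⁻¹ - a l);
     -(ξ₁ (s i) * Qp (q * s i) * Lam (q⁻¹ * s i)) =
       ξ₂ (q⁻¹ * s i) * Qp (q⁻¹ * s i) * Lam (s i)) ↔
    (s i ^ 2 - q) / (q * s i ^ 2 - 1) *
        ((s i - μ) * (s i - μt) / ((μ * s i - 1) * (μt * s i - 1))) *
        (∏ j, (q * s i - s j) * (q * s i * s j - 1) /
          ((s i - q * s j) * (s i * s j - q))) *
        (∏ l, (a l * s i - 1) * (a l * q - s i) /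
          ((a l - s i) * (a l * q * s i - 1))) = -1 := by
  have hx : s i ≠ 0 := hs i
  generalize s i = x at *
  have hd : q * (q⁻¹ * x) ^ 2 - 1 = (x ^ 2 - q) / q := by field_simp
  have hξ : q * (x - μ) * (x - μt) / (q * x ^ 2 - 1) =
      ((x ^ 2 - q) / (q * x ^ 2 - 1) * ((x - μ) * (x - μt) / ((μ * x - 1) * (μt * x - 1)))) *
      ((q * μ * (q⁻¹ * x) - 1) * (q * μt * (q⁻¹ * x) - 1) / (q * (q⁻¹ * x) ^ 2 - 1)) := by
    have e1 : q * μ * (q⁻¹ * x) = μ * x := by field_simp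
    have e2 : q * μt * (q⁻¹ * x) = μt * x := by field_simp
    rw [hd, e1, e2]
    generalize μ * x - 1 = u at *
    generalize μt * x - 1 = v at *
    field_simp
  have hQ : ∏ j, (q * x - s j) * ((q * x)⁻¹ - s j) =
      (∏ j, (q * x - s j) * (q * x * s j - 1) / ((x - q * s j) * (x * s j - q))) *
      ∏ j, (q⁻¹ * x - s j) * ((q⁻¹ * x)⁻¹ - s j) := by
    rw [← Finset.prod_mul_distrib]
    refine Finset.prod_congr rfl fun j _ => ?_
    have e : (q⁻¹ * x - s j) * ((q⁻¹ * x)⁻¹ - s j) =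
        -((x - q * s j) * (x * s j - q)) / (q * x) := by
      field_simp
      ring
    have e3 : (q * x)⁻¹ - s j = -(q * x * s j - 1) / (q * x) := by
      field_simp
      ring
    have := h5 j
    have := h6 j
    rw [e, e3]
    field_simp
  have hL : ∏ l, (q⁻¹ * x - a l) * ((q * (q⁻¹ * x))⁻¹ - a l) =
      (∏ l, (a l * x - 1) * (a l * q - x) / ((a l - x) * (a l * q * x - 1))) *
      ∏ l, (x - a l) * ((q * x)⁻¹ - a l) := by
    rw [← Finset.prod_mul_distrib]
    refine Finset.prod_congr rfl fun l _ => ?_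
    have e : (x - a l) * ((q * x)⁻¹ - a l) =
        ((a l - x) * (a l * q * x - 1)) / (q * x) := by
      field_simp
      ring
    have e3 : (q⁻¹ * x - a l) * ((q * (q⁻¹ * x))⁻¹ - a l) =
        ((a l * x - 1) * (a l * q - x)) / (q * x) := by
      field_simp
      ring
    have h7l := h7 l
    have h8l := h8 l
    rw [e, e3]
    clear e e3
    generalize a l * q * x - 1 = u at *
    field_simp
  have nξ : (q * μ * (q⁻¹ * x) - 1) * (q * μt * (q⁻¹ * x) - 1) / (q * (q⁻¹ * x) ^ 2 - 1) ≠ 0 := by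
    have e1 : q * μ * (q⁻¹ * x) = μ * x := by field_simp
    have e2 : q * μt * (q⁻¹ * x) = μt * x := by field_simp
    rw [hd, e1, e2]
    exact div_ne_zero (mul_ne_zero h3 h4) (div_ne_zero h2 hq)
  have nQ : ∏ j, (q⁻¹ * x - s j) * ((q⁻¹ * x)⁻¹ - s j) ≠ 0 := by
    refine Finset.prod_ne_zero_iff.mpr fun j _ => ?_
    have e : (q⁻¹ * x - s j) * ((q⁻¹ * x)⁻¹ - s j) =
        -((x - q * s j) * (x * s j - q)) / (q * x) := by
      field_simp
      ring
    rw [e]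
    exact div_ne_zero (neg_ne_zero.mpr (mul_ne_zero (h5 j) (h6 j))) (mul_ne_zero hq hx)
  have nL : ∏ l, (x - a l) * ((q * x)⁻¹ - a l) ≠ 0 := by
    refine Finset.prod_ne_zero_iff.mpr fun l _ => ?_
    have e : (x - a l) * ((q * x)⁻¹ - a l) =
        ((a l - x) * (a l * q * x - 1)) / (q * x) := by
      field_simp
      ring
    rw [e]
    exact div_ne_zero (mul_ne_zero (h7 l) (h8 l)) (mul_ne_zero hq hx)
  have key : ∀ R P L A B C : ℂ, A ≠ 0 → B ≠ 0 → C ≠ 0 →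
      (-((R * A) * (P * B) * (γ * (L * C))) = A * B * (γ * C) ↔ R * P * L = -1) := by
    intro R P L A B C hA hB hC
    have hn : A * B * (γ * C) ≠ 0 := mul_ne_zero (mul_ne_zero hA hB) (mul_ne_zero hγ hC)
    constructor
    · intro h
      apply mul_right_cancel₀ hn
      linear_combination -h
    · intro h
      linear_combination (-(A * B * (γ * C))) * h
  dsimp only
  rw [hξ, hQ, hL]
  exact key _ _ _ _ _ _ nξ nQ nL
end

section
/- Let q, μ, μ̃, b, b̃, γ ∈ ℂ be nonzero, let a₁, …, aₙ ∈ ℂ \ {0}, s₁, …, s_k ∈ ℂ \ {0}, and fix 1 ≤ i ≤ k. Define ξ₁(z) = q²(z−μ)(z−μ̃)(z+b)(z+b̃)/((qz²−1)z), ξ₂(z) = (qμz−1)(qμ̃z−1)(qbz+1)(qb̃z+1)/((qz²−1)z), Q₊(z) = ∏_{j=1}^{k}(z−s_j)(1/z−s_j), and Λ(z) = γ∏_{l=1}^{n}(z−a_l)(1/(qz)−a_l). Assume every factor occurring in a denominator below is nonzero. Then the Bethe relation −ξ₁(s_i)·Q₊(q s_i)·Λ(q⁻¹ s_i) = ξ₂(q⁻¹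 s_i)·Q₊(q⁻¹ s_i)·Λ(s_i) holds if and only if ((s_i²−q)/(q s_i²−1)) · ((s_i−μ)(s_i−μ̃)/((μ s_i−1)(μ̃ s_i−1))) · ((s_i+b)(s_i+b̃)/((b s_i+1)(b̃ s_i+1))) · ∏_{j=1}^{k} ((q s_i−s_j)(q s_i s_j−1)/((s_i−q s_j)(s_i s_j−q))) · ∏_{l=1}^{n} ((a_l s_i−1)(a_l q−s_i)/((a_l−s_i)(a_l q s_i−1))) = −1. -/
/-- the Bethe relation for reflection-invariant generalized Z-twisted
(GL(2),q)-opers with a simple (tame) pole at zero is equivalent to the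
Yang–Nepomechie–Zhang open gl₂ XXZ Bethe equations with generic boundary conditions. -/
theorem stmt_6 (q μ μt b bt γ : ℂ) (hq : q ≠ 0) (hμ : μ ≠ 0) (hμt : μt ≠ 0)
    (hb : b ≠ 0) (hbt : bt ≠ 0) (hγ : γ ≠ 0)
    (n k : ℕ) (a : Fin n → ℂ) (s : Fin k → ℂ)
    (ha : ∀ l, a l ≠ 0) (hs : ∀ j, s j ≠ 0) (i : Fin k)
    (h1 : q * s i ^ 2 - 1 ≠ 0) (h2 : s i ^ 2 - q ≠ 0)
    (h3 : μ * s i - 1 ≠ 0) (h4 : μt * s i - 1 ≠ 0)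
    (h5 : b * s i + 1 ≠ 0) (h6 : bt * s i + 1 ≠ 0)
    (h7 : ∀ j, s i - q * s j ≠ 0) (h8 : ∀ j, s i * s j - q ≠ 0)
    (h9 : ∀ l, a l - s i ≠ 0) (h10 : ∀ l, a l * q * s i - 1 ≠ 0) :
    (let ξ₁ : ℂ → ℂ := fun w =>
       q ^ 2 * (w - μ) * (w - μt) * (w + b) * (w + bt) / ((q * w ^ 2 - 1) * w);
     let ξ₂ : ℂ → ℂ := fun w =>
       (q * μ * w - 1) * (q * μt * w - 1) * (q * b * w + 1) * (q * bt * w + 1) /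
         ((q * w ^ 2 - 1) * w);
     let Qp : ℂ → ℂ := fun w => ∏ j, (w - s j) * (w⁻¹ - s j);
     let Lam : ℂ → ℂ := fun w => γ * ∏ l, (w - a l) * ((q * w)⁻¹ - a l);
     -(ξ₁ (s i) * Qp (q * s i) * Lam (q⁻¹ * s i)) =
       ξ₂ (q⁻¹ * s i) * Qp (q⁻¹ * s i) * Lam (s i)) ↔
    (s i ^ 2 - q) / (q * s i ^ 2 - 1) *
        ((s i - μ) * (s i - μt) / ((μ * s i - 1) * (μt * s i - 1))) *
        ((s i + b) * (s i + bt) / ((b * s i + 1) * (bt * s i + 1))) *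
        (∏ j, (q * s i - s j) * (q * s i * s j - 1) /
          ((s i - q * s j) * (s i * s j - q))) *
        (∏ l, (a l * s i - 1) * (a l * q - s i) /
          ((a l - s i) * (a l * q * s i - 1))) = -1 := by
  have hx := hs i
  have hQ : (∏ j, (q * s i - s j) * ((q * s i)⁻¹ - s j)) =
      (∏ j, (q * s i - s j) * (q * s i * s j - 1) / ((s i - q * s j) * (s i * s j - q))) *
      ∏ j, (q⁻¹ * s i - s j) * ((q⁻¹ * s i)⁻¹ - s j) := by
    rw [← Finset.prod_mul_distrib]
    refine Finset.prod_congr rfl fun j _ => ?_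
    have e7 := h7 j
    have e8 := h8 j
    have e : (q⁻¹ * s i - s j) * ((q⁻¹ * s i)⁻¹ - s j) =
        -((s i - q * s j) * (s i * s j - q)) / (q * s i) := by
      field_simp
      ring
    rw [e]
    generalize s i = x at *
    field_simp
    ring
  have hL : (∏ l, (q⁻¹ * s i - a l) * ((q * (q⁻¹ * s i))⁻¹ - a l)) =
      (∏ l, (a l * s i - 1) * (a l * q - s i) / ((a l - s i) * (a l * q * s i - 1))) *
      ∏ l, (s i - a l) * ((q * s i)⁻¹ - a l) := by
    rw [← Finset.prod_mul_distrib]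
    refine Finset.prod_congr rfl fun l _ => ?_
    have e9 := h9 l
    have e10 := h10 l
    have e : (s i - a l) * ((q * s i)⁻¹ - a l) =
        ((a l - s i) * (a l * q * s i - 1)) / (q * s i) := by
      field_simp
      ring
    rw [e, mul_inv_cancel_left₀ hq]
    generalize a l * q * s i - 1 = D at e10 ⊢
    generalize s i = x at *
    field_simp
    ring
  have hQ0 : (∏ j, (q⁻¹ * s i - s j) * ((q⁻¹ * s i)⁻¹ - s j)) ≠ 0 := by
    refine Finset.prod_ne_zero_iff.mpr fun j _ => ?_
    have e : (q⁻¹ * s i - s j) * ((q⁻¹ * s i)⁻¹ - s j) =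
        -((s i - q * s j) * (s i * s j - q)) / (q * s i) := by
      field_simp
      ring
    rw [e]
    exact div_ne_zero (neg_ne_zero.mpr (mul_ne_zero (h7 j) (h8 j))) (mul_ne_zero hq hx)
  have hL0 : (∏ l, (s i - a l) * ((q * s i)⁻¹ - a l)) ≠ 0 := by
    refine Finset.prod_ne_zero_iff.mpr fun l _ => ?_
    have e : (s i - a l) * ((q * s i)⁻¹ - a l) =
        ((a l - s i) * (a l * q * s i - 1)) / (q * s i) := by
      field_simp
      ring
    rw [e]
    exact div_ne_zero (mul_ne_zero (h9 l) (h10 l)) (mul_ne_zero hq hx)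
  have hξ : (q * μ * (q⁻¹ * s i) - 1) * (q * μt * (q⁻¹ * s i) - 1) *
      (q * b * (q⁻¹ * s i) + 1) * (q * bt * (q⁻¹ * s i) + 1) /
         ((q * (q⁻¹ * s i) ^ 2 - 1) * (q⁻¹ * s i)) =
      q ^ 2 * ((μ * s i - 1) * (μt * s i - 1) * (b * s i + 1) * (bt * s i + 1)) /
        ((s i ^ 2 - q) * s i) := by
    have c : ∀ m : ℂ, q * m * (q⁻¹ * s i) = m * s i := fun m => by field_simp
    have d : (q * (q⁻¹ * s i) ^ 2 - 1) * (q⁻¹ * s i) = ((s i ^ 2 - q) * s i) / q ^ 2 := by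
      field_simp
    rw [c, c, c, c, d, div_div_eq_mul_div]
    ring
  have hξ1 : q ^ 2 * (s i - μ) * (s i - μt) * (s i + b) * (s i + bt) /
      ((q * s i ^ 2 - 1) * s i) =
      ((s i ^ 2 - q) / (q * s i ^ 2 - 1) *
        ((s i - μ) * (s i - μt) / ((μ * s i - 1) * (μt * s i - 1))) *
        ((s i + b) * (s i + bt) / ((b * s i + 1) * (bt * s i + 1)))) *
      (q ^ 2 * ((μ * s i - 1) * (μt * s i - 1) * (b * s i + 1) * (bt * s i + 1)) /
        ((s i ^ 2 - q) * s i)) := by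
    clear hQ hL hQ0 hL0 hξ
    generalize μ * s i - 1 = D1 at h3 ⊢
    generalize μt * s i - 1 = D2 at h4 ⊢
    generalize b * s i + 1 = D3 at h5 ⊢
    generalize bt * s i + 1 = D4 at h6 ⊢
    generalize s i = x at *
    field_simp
  have hξ0 : q ^ 2 * ((μ * s i - 1) * (μt * s i - 1) * (b * s i + 1) * (bt * s i + 1)) /
        ((s i ^ 2 - q) * s i) ≠ 0 :=
    div_ne_zero (mul_ne_zero (pow_ne_zero 2 hq)
      (mul_ne_zero (mul_ne_zero (mul_ne_zero h3 h4) h5) h6)) (mul_ne_zero h2 hx)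
  dsimp only
  rw [hQ, hL, hξ, hξ1]
  have key : ∀ R P S X Y Z : ℂ, X ≠ 0 → Y ≠ 0 → Z ≠ 0 →
      (-(R * X * (P * Y) * (γ * (S * Z))) = X * Y * (γ * Z) ↔ R * P * S = -1) := by
    intro R P S X Y Z hX hY hZ
    have hn : X * Y * (γ * Z) ≠ 0 := mul_ne_zero (mul_ne_zero hX hY) (mul_ne_zero hγ hZ)
    constructor
    · intro h
      apply mul_right_cancel₀ hn
      linear_combination -h
    · intro h
      linear_combination (-(X * Y * (γ * Z))) * h
  exact key _ _ _ _ _ _ hξ0 hQ0 hL0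
end

section
/- Fix N ≥ 2, a nonzero q ∈ ℂ, functions ξ₁, …, ξ_N : ℂ \ {0} → ℂ and s₁, …, s_N : ℂ \ {0} → ℂ. For a set of row indices R = {r₁ < r₂ < ⋯ < r_m} ⊆ {1, …, N} and z ∈ ℂ \ {0}, let M_R(z) be the m×m complex matrix whose (i,j) entry is (∏_{t=1}^{j−1} ξ_{r_i}(q^{m−1−t} z)) · s_{r_i}(q^{m−j} z), the product being empty (equal to 1) for j = 1. Define Q₊_m(z) = det M_{{N−m+1, …, N}}(z) for 1 ≤ m ≤ N, set Q₊₀(z) = 1, and define Q₋_m(z) = det M_{{N−m} ∪ {N−m+2, …, N}}(z) for 1 ≤ m ≤ N−1. Then for every 1 ≤ k ≤ N−1 and every z ∈ ℂ \ {0} such that ξ_r(q^{k−1}z) ≠ 0 for all r ∈ {N−k+2, …, N}, the GL(N) QQ-system relation holds: ξ_{N−k+1}(q^{k−1}z)·Q₊_k(z)·Q₋_k(qz) − ξ_{N−k}(q^{k−1}z)·Q₊_k(qz)·Q₋_k(z) = Q₊_{k−1}(qz)·Q₊_{k+1}(z). -/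
/-- The q-Wronskian-type matrix `M_R(z)` of a generalized Z-twisted Miura (GL(N),q)-oper
with diagonal twist entries `ξ` and section components `s` (indexed 1-based), for a
row-label function `r : Fin m → ℕ`.  Its (i,j) entry (0-indexed) is
`(∏_{t=1}^{j} ξ_{r i}(q^{m−1−t} z)) · s_{r i}(q^{m−1−j} z)`. -/
noncomputable def Mwr (q : ℂ) (ξ s : ℕ → ℂ → ℂ) (m : ℕ) (r : Fin m → ℕ) (z : ℂ) :
    Matrix (Fin m) (Fin m) ℂ :=
  Matrix.of fun i j =>
    (∏ t ∈ Finset.range j.val, ξ (r i) (q ^ (m - 2 - t) * z)) *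
      s (r i) (q ^ (m - 1 - j.val) * z)

/-- `Q₊_m(z) = det M_{{N−m+1,…,N}}(z)`, with `Q₊_0 = 1` (1-based row labels). -/
noncomputable def Qplus (q : ℂ) (ξ s : ℕ → ℂ → ℂ) (N m : ℕ) (z : ℂ) : ℂ :=
  if m = 0 then 1 else (Mwr q ξ s m (fun i => N - m + 1 + i.val) z).det

/-- `Q₋_m(z) = det M_{{N−m} ∪ {N−m+2,…,N}}(z)` (1-based row labels). -/
noncomputable def Qminus (q : ℂ) (ξ s : ℕ → ℂ → ℂ) (N m : ℕ) (z : ℂ) : ℂ :=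
  (Mwr q ξ s m (fun i => if i.val = 0 then N - m else N - m + 1 + i.val) z).det

lemma dj_aux {R : Type*} [CommRing R] [IsDomain R] (n : ℕ)
    (M : Matrix (Fin (n+2)) (Fin (n+2)) R) (h : M.det ≠ 0) :
    (M.submatrix (Fin.succAbove 0) (Fin.succAbove 0)).det *
      (M.submatrix (Fin.succAbove 1) (Fin.succAbove (Fin.last (n+1)))).det -
    (M.submatrix (Fin.succAbove 0) (Fin.succAbove (Fin.last (n+1)))).det *
      (M.submatrix (Fin.succAbove 1) (Fin.succAbove 0)).det =
    (M.submatrix (fun i : Fin n => i.succ.succ) (fun i : Fin n => i.castSucc.succ)).det * M.det := by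
  let e : Fin 2 ⊕ Fin n ≃ Fin (n+2) := finSumFinEquiv.trans (finCongr (by omega))
  let f : Fin 2 ⊕ Fin n ≃ Fin (n+2) := e.trans (finRotate (n+2)).symm
  have e0 : e (Sum.inl 0) = 0 := by ext; simp [e]
  have e1 : e (Sum.inl 1) = 1 := by ext; simp [e]
  have e2 : ∀ j, e (Sum.inr j) = j.succ.succ := by intro j; ext; simp [e]
  have f0 : f (Sum.inl 0) = Fin.last (n+1) := by
    simp only [f, Equiv.trans_apply, e0, Equiv.symm_apply_eq]; simp
  have f1 : f (Sum.inl 1) = 0 := by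
    simp only [f, Equiv.trans_apply, e1, Equiv.symm_apply_eq]; simp
  have f2 : ∀ j, f (Sum.inr j) = j.castSucc.succ := by
    intro j
    simp only [f, Equiv.trans_apply, e2, Equiv.symm_apply_eq]
    ext; simp [Fin.val_add_one, Fin.ext_iff]; omega
  let A := M.submatrix e f
  let B := M.adjugate.submatrix f e
  have hAB : A * B = M.det • 1 := by
    simp only [A, B]
    rw [Matrix.submatrix_mul_equiv, Matrix.mul_adjugate]
    ext i j; simp [Matrix.one_apply]
  let X : Matrix (Fin 2 ⊕ Fin n) (Fin 2 ⊕ Fin n) R := Matrix.fromBlocks B.toBlocks₁₁ 0 B.toBlocks₂₁ 1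
  have hAX : A * X = Matrix.fromBlocks (M.det • 1) A.toBlocks₁₂ 0 A.toBlocks₂₂ := by
    have h1 := hAB
    rw [← Matrix.fromBlocks_toBlocks A, ← Matrix.fromBlocks_toBlocks B,
      Matrix.fromBlocks_multiply, ← Matrix.fromBlocks_one, Matrix.fromBlocks_smul,
      Matrix.fromBlocks_inj] at h1
    conv_lhs => rw [← Matrix.fromBlocks_toBlocks A]
    simp only [X]
    rw [Matrix.fromBlocks_multiply, h1.1, h1.2.2.1]
    simp
  have hd := congrArg Matrix.det hAX
  have hA : A.det = (-1)^(n+1) * M.det := by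
    have : A = (M.submatrix id (finRotate (n+2)).symm).submatrix e e := rfl
    rw [this, Matrix.det_submatrix_equiv_self, Matrix.det_permute']
    simp [sign_finRotate]
  have hA2 : A.toBlocks₂₂ = M.submatrix (fun i : Fin n => i.succ.succ) (fun i : Fin n => i.castSucc.succ) := by
    ext i j; simp [A, Matrix.toBlocks₂₂, e2, f2]
  rw [Matrix.det_mul, Matrix.det_fromBlocks_zero₁₂, Matrix.det_fromBlocks_zero₂₁, hA, hA2,
    Matrix.det_smul, Matrix.det_one, Matrix.det_one, Matrix.det_fin_two] at hd
  simp only [Matrix.toBlocks₁₁, B, Matrix.of_apply, Matrix.submatrix_apply, e0, e1, f0, f1,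
    Matrix.adjugate_fin_succ_eq_det_submatrix] at hd
  apply mul_left_cancel₀ h
  have hs : ((-1 : R)^n)*(-1)^n = 1 := by rw [← mul_pow]; simp
  simp only [Fintype.card_fin, Fin.val_zero, Fin.val_last, Fin.val_one, pow_add, pow_zero,
    pow_one] at hd
  linear_combination hd - (M.det * ((M.submatrix (Fin.succAbove 0) (Fin.succAbove 0)).det *
      (M.submatrix (Fin.succAbove 1) (Fin.succAbove (Fin.last (n+1)))).det -
    (M.submatrix (Fin.succAbove 0) (Fin.succAbove (Fin.last (n+1)))).det *
      (M.submatrix (Fin.succAbove 1) (Fin.succAbove 0)).det)) * hs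

lemma dj {R : Type*} [CommRing R] (n : ℕ)
    (M : Matrix (Fin (n+2)) (Fin (n+2)) R) :
    (M.submatrix (Fin.succAbove 0) (Fin.succAbove 0)).det *
      (M.submatrix (Fin.succAbove 1) (Fin.succAbove (Fin.last (n+1)))).det -
    (M.submatrix (Fin.succAbove 0) (Fin.succAbove (Fin.last (n+1)))).det *
      (M.submatrix (Fin.succAbove 1) (Fin.succAbove 0)).det =
    (M.submatrix (fun i : Fin n => i.succ.succ) (fun i : Fin n => i.castSucc.succ)).det * M.det := by
  have h := dj_aux n (Matrix.mvPolynomialX (Fin (n+2)) (Fin (n+2)) ℤ)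
    (Matrix.det_mvPolynomialX_ne_zero _ _)
  have h2 := congrArg (MvPolynomial.eval₂Hom (Int.castRingHom R) fun p : Fin (n+2) × Fin (n+2) => M p.1 p.2) h
  have hM : (MvPolynomial.eval₂Hom (Int.castRingHom R) fun p : Fin (n+2) × Fin (n+2) => M p.1 p.2).mapMatrix
      (Matrix.mvPolynomialX (Fin (n+2)) (Fin (n+2)) ℤ) = M := by
    ext i j; simp [Matrix.mvPolynomialX_apply]
  simp only [map_sub, map_mul, RingHom.map_det, RingHom.mapMatrix_apply, ← Matrix.submatrix_map] at h2 hM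
  rw [hM] at h2
  exact h2

/-- the generalized minors of the q-Wronskian matrices of a generalized
Z-twisted Miura (GL(N),q)-oper satisfy the GL(N) QQ-system. -/
theorem stmt_9 (N : ℕ) (hN : 2 ≤ N) (q : ℂ) (hq : q ≠ 0) (ξ s : ℕ → ℂ → ℂ)
    (k : ℕ) (hk1 : 1 ≤ k) (hk2 : k ≤ N - 1) (z : ℂ) (hz : z ≠ 0)
    (hξ : ∀ r : ℕ, N - k + 2 ≤ r → r ≤ N → ξ r (q ^ (k - 1) * z) ≠ 0) :
    ξ (N - k + 1) (q ^ (k - 1) * z) * Qplus q ξ s N k z * Qminus q ξ s N k (q * z) -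
      ξ (N - k) (q ^ (k - 1) * z) * Qplus q ξ s N k (q * z) * Qminus q ξ s N k z =
    Qplus q ξ s N (k - 1) (q * z) * Qplus q ξ s N (k + 1) z := by
  obtain ⟨n, rfl⟩ : ∃ n, k = n + 1 := ⟨k - 1, by omega⟩
  obtain ⟨c, rfl⟩ : ∃ c, N = n + 2 + c := ⟨N - (n+2), by omega⟩
  have a1 : n + 2 + c - (n + 1) = c + 1 := by omega
  have a2 : n + 2 + c - (n + 1 + 1) = c := by omega
  have a3 : n + 2 + c - n = c + 2 := by omega
  simp only [a1, Nat.add_sub_cancel] at hξ ⊢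
  -- rewriting of the matrix entries
  have shift : ∀ (m : ℕ) (r : Fin (m+1) → ℕ) (r' : Fin m → ℕ) (i : Fin (m+1)) (i' : Fin m)
      (j : Fin m), r i = r' i' →
      Mwr q ξ s (m+1) r z i j.castSucc = Mwr q ξ s m r' (q * z) i' j := by
    intro m r r' i i' j hr
    have hj := j.2
    simp only [Mwr, Matrix.of_apply, hr, Fin.val_castSucc]
    congr 1
    · refine Finset.prod_congr rfl fun t ht => ?_
      have := Finset.mem_range.1 ht
      rw [← mul_assoc, ← pow_succ]
      congr 3; omega
    · rw [← mul_assoc, ← pow_succ]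
      congr 3; omega
  have shift2 : ∀ (m : ℕ) (r : Fin (m+1) → ℕ) (r' : Fin m → ℕ) (i : Fin (m+1)) (i' : Fin m)
      (j : Fin m), r i = r' i' →
      Mwr q ξ s (m+1) r z i j.succ = ξ (r' i') (q ^ (m - 1) * z) * Mwr q ξ s m r' z i' j := by
    intro m r r' i i' j hr
    have hj := j.2
    simp only [Mwr, Matrix.of_apply, hr, Fin.val_succ]
    rw [Finset.prod_range_succ', mul_comm (Finset.prod _ _), mul_assoc]
    congr 2
    · refine Finset.prod_congr rfl fun t ht => ?_
      congr 3; omega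
    · congr 3; omega
  set M := Mwr q ξ s (n+2) (fun i => c + 1 + i.val) z with hM
  set P : ℂ := ∏ i : Fin n, ξ (c + 3 + i.val) (q ^ n * z) with hP
  have hP0 : P ≠ 0 := Finset.prod_ne_zero_iff.2 fun i _ => hξ _ (by omega) (by omega)
  have hQ : Qplus q ξ s (n+2+c) (n+1+1) z = M.det := by
    simp only [Qplus, a2]; rfl
  have hlast : ∀ j : Fin (n+1), (Fin.last (n+1)).succAbove j = j.castSucc := fun j => by simp
  have h1v : ∀ i : Fin (n+1), (((1 : Fin (n+2)).succAbove i : Fin (n+2)) : ℕ)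
      = if i.val = 0 then 0 else i.val + 1 := by
    intro i
    refine Fin.cases ?_ (fun i => ?_) i
    · simp
    · rw [← Fin.succ_zero_eq_one, Fin.succ_succAbove_succ]; simp
  have m00 : (M.submatrix (Fin.succAbove 0) (Fin.succAbove 0)).det =
      P * ξ (c+2) (q^n*z) * Qplus q ξ s (n+2+c) (n+1) z := by
    have : M.submatrix (Fin.succAbove 0) (Fin.succAbove 0) = Matrix.of fun i j =>
        ξ (c + 2 + i.val) (q^n*z) * Mwr q ξ s (n+1) (fun i => c + 2 + i.val) z i j := by
      ext i j
      simp only [Matrix.submatrix_apply, Fin.succAbove_zero]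
      refine shift2 _ _ (fun i => c + 2 + i.val) _ _ _ ?_
      simp; omega
    rw [this, Matrix.det_mul_column, Fin.prod_univ_succ]
    simp only [Qplus, a1, hP, Fin.val_succ, Fin.val_zero, Nat.add_eq_zero_iff, one_ne_zero, and_false, if_false]
    rw [mul_comm (ξ _ _)]
    congr 2
    exact Finset.prod_congr rfl fun i _ => by congr 1; omega
  have m10 : (M.submatrix (Fin.succAbove 1) (Fin.succAbove 0)).det =
      P * ξ (c+1) (q^n*z) * Qminus q ξ s (n+2+c) (n+1) z := by
    have : M.submatrix (Fin.succAbove 1) (Fin.succAbove 0) = Matrix.of fun i j =>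
        ξ (if i.val = 0 then c + 1 else c + 1 + 1 + i.val) (q^n*z) *
          Mwr q ξ s (n+1) (fun i => if i.val = 0 then c + 1 else c + 1 + 1 + i.val) z i j := by
      ext i j
      simp only [Matrix.submatrix_apply, Fin.succAbove_zero]
      refine shift2 _ _ (fun i => if i.val = 0 then c + 1 else c + 1 + 1 + i.val) _ _ _ ?_
      simp only [h1v]; split_ifs <;> omega
    rw [this, Matrix.det_mul_column, Fin.prod_univ_succ]
    simp only [Qminus, a1, hP, Fin.val_succ, Fin.val_zero, Nat.add_eq_zero_iff, one_ne_zero, and_false, if_false, if_true]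
    rw [mul_comm (ξ _ _)]
    congr 2
    exact Finset.prod_congr rfl fun i _ => by congr 1; omega
  have m0l : (M.submatrix (Fin.succAbove 0) (Fin.succAbove (Fin.last (n+1)))).det =
      Qplus q ξ s (n+2+c) (n+1) (q*z) := by
    simp only [Qplus, a1, Nat.add_eq_zero_iff, one_ne_zero, and_false, if_false]
    congr 1
    ext i j
    simp only [Matrix.submatrix_apply, Fin.succAbove_zero, hlast]
    exact shift _ _ _ _ _ _ (by simp; omega)
  have m1l : (M.submatrix (Fin.succAbove 1) (Fin.succAbove (Fin.last (n+1)))).det =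
      Qminus q ξ s (n+2+c) (n+1) (q*z) := by
    simp only [Qminus, a1]
    congr 1
    ext i j
    simp only [Matrix.submatrix_apply, hlast]
    exact shift _ _ _ _ _ _ (by simp only [h1v]; split_ifs <;> omega)
  have mm : (M.submatrix (fun i : Fin n => i.succ.succ) (fun i : Fin n => i.castSucc.succ)).det =
      P * Qplus q ξ s (n+2+c) n (q*z) := by
    have hq' : Qplus q ξ s (n+2+c) n (q*z) = (Mwr q ξ s n (fun i => c + 3 + i.val) (q*z)).det := by
      simp only [Qplus, a3]
      split_ifs with h
      · subst h; simp
      · rfl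
    have : M.submatrix (fun i : Fin n => i.succ.succ) (fun i : Fin n => i.castSucc.succ) =
        Matrix.of fun i j =>
        ξ (c + 3 + i.val) (q^n*z) * Mwr q ξ s n (fun i => c + 3 + i.val) (q*z) i j := by
      ext i j
      simp only [Matrix.submatrix_apply, Matrix.of_apply]
      rw [hM, shift2 (n+1) _ (fun i => c + 2 + i.val) _ i.succ _ (by simp; omega),
        shift n _ (fun i => c + 3 + i.val) _ i _ (by simp; omega)]
      congr 2
      simp; omega
    rw [this, Matrix.det_mul_column, hq']
  have key := dj n M
  rw [m00, m10, m0l, m1l, mm] at key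
  rw [hQ]
  apply mul_left_cancel₀ hP0
  linear_combination key
end

section
/- Fix N ≥ 2, a nonzero q ∈ ℂ, 1 ≤ k ≤ N−1, functions ξ_{N−k}, ξ_{N−k+1} : ℂ \ {0} → ℂ, natural numbers p_{k−1}, p_k, p_{k+1}, and nonzero complex numbers s_{m,j} for m ∈ {k−1, k, k+1}, 1 ≤ j ≤ p_m. For each such m define Q₊_m(z) = ∏_{j=1}^{p_m}(z − s_{m,j})(1/(q^{m−1}z) − s_{m,j}) (with Q₊₀(z) = 1 if k = 1). Fix 1 ≤ i ≤ p_k and write s = s_{k,i}; assume every factor occurring in a denominator below is nonzero. Then the Bethe relation −(ξ_{N−k+1}(q^{k−2}s)/ξ_{N−k}(q^{k−1}s)) · (Q₊_{k−1}(qs)Q₊_k(q⁻¹s)Q₊_{k+1}(s))/(Q₊_{k−1}(s)Q₊_k(qs)Q₊_{k+1}(q⁻¹s)) = 1 holds if and only if −(ξ_{N−k+1}(q^{k−2}s)/ξ_{N−k}(q^{k−1}s)) · q^{p_k} ∏_{j=1}^{p_k} ((q^{k−2}s·s_{k,j}−1)(s−q·s_{k,j}))/((q^{k}s·s_{k,j}−1)(q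 s−s_{k,j})) = q^{p_{k−1}} ∏_{j=1}^{p_{k−1}} ((q^{k−2}s·s_{k−1,j}−1)(s−s_{k−1,j}))/((q^{k−1}s·s_{k−1,j}−1)(q s−s_{k−1,j})) · ∏_{j=1}^{p_{k+1}} ((q^{k−1}s·s_{k+1,j}−1)(s−q·s_{k+1,j}))/((q^{k}s·s_{k+1,j}−1)(s−s_{k+1,j})). -/
/-- The reflection-symmetric Laurent polynomial
`Q₊_m(z) = ∏_j (z − root j) · (1/(q^{m−1} z) − root j)`. -/
noncomputable def QL (q : ℂ) (m : ℕ) {p : ℕ} (root : Fin p → ℂ) (z : ℂ) : ℂ :=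
  ∏ j, (z - root j) * ((q ^ ((m : ℤ) - 1) * z)⁻¹ - root j)

theorem QL_ne_zero (q : ℂ) (m : ℕ) {p : ℕ} (root : Fin p → ℂ) (z c : ℂ) (hc : c ≠ 0)
    (hcz : q ^ ((m : ℤ) - 1) * z = c)
    (h1 : ∀ j, z - root j ≠ 0) (h2 : ∀ j, c * root j - 1 ≠ 0) : QL q m root z ≠ 0 := by
  unfold QL
  refine Finset.prod_ne_zero_iff.mpr fun j _ => mul_ne_zero (h1 j) ?_
  rw [hcz]
  intro h
  apply h2 j
  have h' : root j = c⁻¹ := by linear_combination -h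
  rw [h', mul_inv_cancel₀ hc, sub_self]

/-- with the reflection-symmetric `Q₊_m`, the general Bethe relation of the
GL(N) QQ-system is equivalent to the explicit generalized gl_N XXZ Bethe equations for
open spin chains.  Here `ξa = ξ_{N−k}`, `ξb = ξ_{N−k+1}`, and `s = s_{k,i}`. -/
theorem stmt_11 (N : ℕ) (hN : 2 ≤ N) (q : ℂ) (hq : q ≠ 0)
    (k : ℕ) (hk1 : 1 ≤ k) (hk2 : k ≤ N - 1) (ξa ξb : ℂ → ℂ)
    (pkm pk pkp : ℕ) (hp0 : k = 1 → pkm = 0)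
    (skm : Fin pkm → ℂ) (sk : Fin pk → ℂ) (skp : Fin pkp → ℂ)
    (hskm : ∀ j, skm j ≠ 0) (hsk : ∀ j, sk j ≠ 0) (hskp : ∀ j, skp j ≠ 0)
    (i : Fin pk)
    (hξa : ξa (q ^ ((k : ℤ) - 1) * sk i) ≠ 0)
    (e1 : ∀ j, sk i - skm j ≠ 0) (e2 : ∀ j, q * sk i - skm j ≠ 0)
    (e3 : ∀ j, q ^ ((k : ℤ) - 2) * sk i * skm j - 1 ≠ 0)
    (e4 : ∀ j, q ^ ((k : ℤ) - 1) * sk i * skm j - 1 ≠ 0)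
    (e5 : ∀ j, q * sk i - sk j ≠ 0)
    (e6 : ∀ j, q ^ (k : ℤ) * sk i * sk j - 1 ≠ 0)
    (e7 : ∀ j, sk i - skp j ≠ 0)
    (e8 : ∀ j, q ^ (k : ℤ) * sk i * skp j - 1 ≠ 0)
    (e9 : ∀ j, sk i - q * skp j ≠ 0)
    (e10 : ∀ j, q ^ ((k : ℤ) - 1) * sk i * skp j - 1 ≠ 0) :
    (-(ξb (q ^ ((k : ℤ) - 2) * sk i) / ξa (q ^ ((k : ℤ) - 1) * sk i)) *
        (QL q (k - 1) skm (q * sk i) * QL q k sk (q⁻¹ * sk i) * QL q (k + 1) skp (sk i)) /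
        (QL q (k - 1) skm (sk i) * QL q k sk (q * sk i) * QL q (k + 1) skp (q⁻¹ * sk i))
        = 1) ↔
    (-(ξb (q ^ ((k : ℤ) - 2) * sk i) / ξa (q ^ ((k : ℤ) - 1) * sk i)) * q ^ pk *
        ∏ j, (q ^ ((k : ℤ) - 2) * sk i * sk j - 1) * (sk i - q * sk j) /
          ((q ^ (k : ℤ) * sk i * sk j - 1) * (q * sk i - sk j)) =
      q ^ pkm *
        (∏ j, (q ^ ((k : ℤ) - 2) * sk i * skm j - 1) * (sk i - skm j) /
          ((q ^ ((k : ℤ) - 1) * sk i * skm j - 1) * (q * sk i - skm j))) *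
        ∏ j, (q ^ ((k : ℤ) - 1) * sk i * skp j - 1) * (sk i - q * skp j) /
          ((q ^ (k : ℤ) * sk i * skp j - 1) * (sk i - skp j))) := by
  have hs : sk i ≠ 0 := hsk i
  obtain ⟨u, hu⟩ : ∃ u, u = q ^ ((k : ℤ) - 2) := ⟨_, rfl⟩
  have hu0 : u ≠ 0 := by rw [hu]; exact zpow_ne_zero _ hq
  have hk1' : q ^ ((k : ℤ) - 1) = u * q := by
    rw [hu, ← zpow_add_one₀ hq]; congr 1; ring
  have hk0' : q ^ (k : ℤ) = u * q * q := by
    rw [← hk1', ← zpow_add_one₀ hq]; congr 1; ring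
  have c1 : q ^ (((k - 1 : ℕ) : ℤ) - 1) = u := by
    rw [hu]; congr 1; push_cast [hk1]; ring
  have c2 : q ^ (((k + 1 : ℕ) : ℤ) - 1) = u * q * q := by
    rw [← hk0']; congr 1; push_cast; ring
  simp only [hk1', hk0', ← hu] at e3 e4 e6 e8 e10 ⊢
  generalize -(ξb (u * sk i) / ξa (u * q * sk i)) = c
  generalize sk i = s at *
  have A1 : QL q (k - 1) skm (q * s) ≠ 0 :=
    QL_ne_zero _ _ _ _ (u * q * s) (by positivity) (by rw [c1]; ring) e2 e4
  have A2 : QL q (k - 1) skm s ≠ 0 :=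
    QL_ne_zero _ _ _ _ (u * s) (by positivity) (by rw [c1]) e1 e3
  have C1 : QL q (k + 1) skp s ≠ 0 :=
    QL_ne_zero _ _ _ _ (u * q * q * s) (by positivity) (by rw [c2]) e7 e8
  have C2 : QL q (k + 1) skp (q⁻¹ * s) ≠ 0 :=
    QL_ne_zero _ _ _ _ (u * q * s) (by positivity) (by rw [c2]; field_simp)
      (fun j h => e9 j (by field_simp at h; linear_combination h)) e10
  have RA : q ^ pkm * (∏ j, (u * s * skm j - 1) * (s - skm j) /
      ((u * q * s * skm j - 1) * (q * s - skm j))) =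
      QL q (k - 1) skm s / QL q (k - 1) skm (q * s) := by
    unfold QL
    rw [← Finset.prod_div_distrib, ← Fin.prod_const, ← Finset.prod_mul_distrib]
    refine Finset.prod_congr rfl fun j _ => ?_
    rw [c1]
    have h2 := e2 j
    have h4 := e4 j
    have x1 : (u * s)⁻¹ - skm j = -(u * s * skm j - 1) / (u * s) := by field_simp; ring
    have x2 : (u * (q * s))⁻¹ - skm j = -(u * q * s * skm j - 1) / (u * q * s) := by
      field_simp; ring
    rw [x1, x2]
    generalize u * q * s * skm j - 1 = a at *
    generalize u * s * skm j - 1 = a' at *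
    generalize q * s - skm j = b at *
    field_simp
  have RB : q ^ pk * (∏ j, (u * s * sk j - 1) * (s - q * sk j) /
      ((u * q * q * s * sk j - 1) * (q * s - sk j))) =
      QL q k sk (q⁻¹ * s) / QL q k sk (q * s) := by
    unfold QL
    rw [← Finset.prod_div_distrib, ← Fin.prod_const, ← Finset.prod_mul_distrib]
    refine Finset.prod_congr rfl fun j _ => ?_
    rw [hk1']
    have h2 := e5 j
    have h4 := e6 j
    have x1 : (u * q * (q⁻¹ * s))⁻¹ - sk j = -(u * s * sk j - 1) / (u * s) := by
      field_simp; ring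
    have x2 : (u * q * (q * s))⁻¹ - sk j = -(u * q * q * s * sk j - 1) / (u * q * q * s) := by
      field_simp; ring
    have x3 : q⁻¹ * s - sk j = (s - q * sk j) / q := by field_simp
    rw [x1, x2, x3]
    generalize u * q * q * s * sk j - 1 = a at *
    generalize u * s * sk j - 1 = a' at *
    generalize q * s - sk j = b at *
    generalize s - q * sk j = b' at *
    field_simp
  have RC : (∏ j, (u * q * s * skp j - 1) * (s - q * skp j) /
      ((u * q * q * s * skp j - 1) * (s - skp j))) =
      QL q (k + 1) skp (q⁻¹ * s) / QL q (k + 1) skp s := by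
    unfold QL
    rw [← Finset.prod_div_distrib]
    refine Finset.prod_congr rfl fun j _ => ?_
    rw [c2]
    have h2 := e7 j
    have h4 := e8 j
    have x1 : (u * q * q * (q⁻¹ * s))⁻¹ - skp j = -(u * q * s * skp j - 1) / (u * q * s) := by
      field_simp; ring
    have x2 : (u * q * q * s)⁻¹ - skp j = -(u * q * q * s * skp j - 1) / (u * q * q * s) := by
      field_simp; ring
    have x3 : q⁻¹ * s - skp j = (s - q * skp j) / q := by field_simp
    rw [x1, x2, x3]
    generalize u * q * q * s * skp j - 1 = a at *
    generalize u * q * s * skp j - 1 = a' at *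
    generalize s - skp j = b at *
    generalize s - q * skp j = b' at *
    field_simp
  rw [mul_assoc c, RA, RB, RC]
  generalize QL q (k - 1) skm (q * s) = a1 at *
  generalize QL q (k - 1) skm s = a2 at *
  generalize QL q (k + 1) skp s = d1 at *
  generalize QL q (k + 1) skp (q⁻¹ * s) = d2 at *
  have key : c * (a1 * QL q k sk (q⁻¹ * s) * d1) / (a2 * QL q k sk (q * s) * d2) =
      (c * (QL q k sk (q⁻¹ * s) / QL q k sk (q * s))) / (a2 / a1 * (d2 / d1)) := by
    simp only [div_eq_mul_inv, mul_inv, inv_inv]; ring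
  rw [key, div_eq_one_iff_eq]
  exact mul_ne_zero (div_ne_zero A2 A1) (div_ne_zero C2 C1)
end

section
/- Fix N ≥ 2 and a nonzero q ∈ ℂ. Let ξ₁, …, ξ_N : ℂ \ {0} → ℂ \ {0} be nowhere-vanishing functions, set Z(z) = diag(ξ₁(z), …, ξ_N(z)), and let s : ℂ \ {0} → ℂᴺ be a function with s(1/z) = s(z) for all z ≠ 0. For 1 ≤ k ≤ N define the q-Wronskian D_k(z) as the determinant of the N×N matrix whose first N−k columns are the standard basis vectors e₁, …, e_{N−k} and whose (N−k+j)-th column, for j = 1, …, k, is Z(q^{k−2}z)·Z(q^{k−3}z)⋯Z(q^{k−j}z)·s(q^{k−j}z) (the product of Z's being empty for j = 1, so that column equals s(q^{k−1}z)). Assume that for every 1 ≤ i ≤ N and every z ≠ 0: ξ_i(z)·ξ_i(1/(qz)) = −ξ_N(1/(qz))·ξ_{N−1}(1/(qz)). Then for every 2 ≤ k ≤ N and every z ≠ 0, D_k(1/(q^{k−1}z)) = C_k(z)·D_k(z), where C_k(z) = (−1)^{k(k−1)/2} ∏_{j=0}^{k−2} [ (∏_{i=1}^{k} ξ_{N+1−i}(1/(q^{j+1}z)))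 · (∏_{i=1}^{k−1−j} (−ξ_N(1/(q^{j+i}z))⁻¹ · ξ_{N−1}(1/(q^{j+i}z))⁻¹)) ]. In particular, if C_k(z) = 1 for all z ≠ 0 then D_k(1/(q^{k−1}z)) = D_k(z) for all z ≠ 0. -/
/-- The q-Wronskian `D_k(z)` of a generalized Z-twisted Miura (GL(N),q)-oper in the
diagonal gauge, with diagonal twist entries `ξ` and section components `s` (1-based):
the determinant of the N×N matrix whose first N−k columns are the standard basis vectors
`e₁, …, e_{N−k}` and whose (N−k+j)-th column (j = 1,…,k) has r-th component
`(∏_{m=k−j}^{k−2} ξ_r(q^m z)) · s_r(q^{k−j} z)`. -/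
noncomputable def Dwr (N : ℕ) (q : ℂ) (ξ s : ℕ → ℂ → ℂ) (k : ℕ) (z : ℂ) : ℂ :=
  (Matrix.of fun r c : Fin N =>
    if c.val < N - k then (if r = c then (1 : ℂ) else 0)
    else
      (∏ t ∈ Finset.range (c.val - (N - k)), ξ (r.val + 1) (q ^ (k - 2 - t) * z)) *
        s (r.val + 1) (q ^ (k - 1 - (c.val - (N - k))) * z)).det

/-- The constant `C_k(z)` relating `D_k(1/(q^{k−1}z))` and `D_k(z)`. -/
noncomputable def Ck (N : ℕ) (q : ℂ) (ξ : ℕ → ℂ → ℂ) (k : ℕ) (z : ℂ) : ℂ :=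
  (-1 : ℂ) ^ (k * (k - 1) / 2) *
    ∏ j ∈ Finset.range (k - 1),
      ((∏ i ∈ Finset.range k, ξ (N - i) ((q ^ (j + 1) * z)⁻¹)) *
        ∏ i ∈ Finset.range (k - 1 - j),
          -((ξ N ((q ^ (j + 1 + i) * z)⁻¹))⁻¹ * (ξ (N - 1) ((q ^ (j + 1 + i) * z)⁻¹))⁻¹))

theorem aux_sign_rev (k : ℕ) : ((Equiv.Perm.sign (Fin.revPerm : Equiv.Perm (Fin k)) : ℤˣ) : ℤ) =
    (-1) ^ (k * (k - 1) / 2) := by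
  rw [Equiv.Perm.sign_eq_prod_prod_Iio]
  have h : ∀ j : Fin k, (∏ i ∈ Finset.Iio j, if (Fin.revPerm i : Fin k) < Fin.revPerm j then (1 : ℤˣ) else -1)
      = (-1) ^ (j : ℕ) := by
    intro j
    rw [Finset.prod_congr rfl (g := fun _ => (-1 : ℤˣ))]
    · simp
    · intro i hi
      have := Finset.mem_Iio.1 hi
      rw [if_neg]
      simp only [Fin.revPerm_apply, Fin.rev_lt_rev, not_lt]
      exact this.le
  rw [Finset.prod_congr rfl (fun j _ => h j), Fin.prod_univ_eq_prod_range (fun j => (-1 : ℤˣ) ^ j),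
    Finset.prod_pow_eq_pow_sum, Finset.sum_range_id]
  simp

theorem aux_block (n k : ℕ) (q : ℂ) (ξ s : ℕ → ℂ → ℂ) (z : ℂ) :
    Dwr (n + k) q ξ s k z = (Matrix.of fun r c : Fin k =>
      (∏ t ∈ Finset.range c.val, ξ (n + r.val + 1) (q ^ (k - 2 - t) * z)) *
        s (n + r.val + 1) (q ^ (k - 1 - c.val) * z)).det := by
  unfold Dwr
  rw [← Matrix.det_submatrix_equiv_self finSumFinEquiv, ← Matrix.fromBlocks_toBlocks (Matrix.submatrix _ _ _)]
  rw [show (Matrix.submatrix _ _ _ : Matrix (Fin n ⊕ Fin k) (Fin n ⊕ Fin k) ℂ).toBlocks₂₁ = 0 from ?_,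
    Matrix.det_fromBlocks_zero₂₁,
    show (Matrix.submatrix _ _ _ : Matrix (Fin n ⊕ Fin k) (Fin n ⊕ Fin k) ℂ).toBlocks₁₁ = 1 from ?_,
    Matrix.det_one, one_mul]
  · congr 1
    ext r c
    simp [Matrix.toBlocks₂₂]
  · ext r c
    simp [Matrix.toBlocks₁₁, Matrix.one_apply]
  · ext r c
    simp [Matrix.toBlocks₂₁, Fin.ext_iff]
    intro h
    omega

/-- for a reflection-invariant section (`s(1/z) = s(z)`) and nowhere
vanishing twists satisfying `ξ_i(z)·ξ_i(1/(qz)) = −ξ_N(1/(qz))·ξ_{N−1}(1/(qz))`, the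
q-Wronskians satisfy `D_k(1/(q^{k−1}z)) = C_k(z)·D_k(z)`; in particular if `C_k ≡ 1`
then `D_k` is reflection-symmetric. -/
theorem stmt_12 (N : ℕ) (hN : 2 ≤ N) (q : ℂ) (hq : q ≠ 0) (ξ s : ℕ → ℂ → ℂ)
    (hξne : ∀ i : ℕ, 1 ≤ i → i ≤ N → ∀ z : ℂ, z ≠ 0 → ξ i z ≠ 0)
    (hs : ∀ r : ℕ, 1 ≤ r → r ≤ N → ∀ z : ℂ, z ≠ 0 → s r z⁻¹ = s r z)
    (hrel : ∀ i : ℕ, 1 ≤ i → i ≤ N → ∀ z : ℂ, z ≠ 0 →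
      ξ i z * ξ i ((q * z)⁻¹) = -(ξ N ((q * z)⁻¹) * ξ (N - 1) ((q * z)⁻¹))) :
    ∀ k : ℕ, 2 ≤ k → k ≤ N → ∀ z : ℂ, z ≠ 0 →
      Dwr N q ξ s k ((q ^ (k - 1) * z)⁻¹) = Ck N q ξ k z * Dwr N q ξ s k z ∧
      ((∀ w : ℂ, w ≠ 0 → Ck N q ξ k w = 1) →
        ∀ w : ℂ, w ≠ 0 → Dwr N q ξ s k ((q ^ (k - 1) * w)⁻¹) = Dwr N q ξ s k w) := by
  have key : ∀ k : ℕ, 2 ≤ k → k ≤ N → ∀ z : ℂ, z ≠ 0 →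
      Dwr N q ξ s k ((q ^ (k - 1) * z)⁻¹) = Ck N q ξ k z * Dwr N q ξ s k z := by
    intro k hk hkN z hz
    obtain ⟨n, rfl⟩ : ∃ n, N = n + k := ⟨N - k, by omega⟩
    rw [aux_block, aux_block]
    have hqz : ∀ m : ℕ, q ^ m * z ≠ 0 := fun m => mul_ne_zero (pow_ne_zero _ hq) hz
    -- reflected points
    have hpt : ∀ m, m ≤ k - 1 → q ^ (k - 1 - m) * (q ^ (k - 1) * z)⁻¹ = (q ^ m * z)⁻¹ := by
      intro m hm
      have : q ^ (k - 1) = q ^ (k - 1 - m) * q ^ m := by rw [← pow_add]; congr 1; omega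
      rw [this]
      have := pow_ne_zero (k - 1 - m) hq
      have := pow_ne_zero m hq
      field_simp
    set x : ℕ → ℕ → ℂ := fun r m => ξ r ((q ^ (m + 1) * z)⁻¹) with hx
    have hxne : ∀ r m, 1 ≤ r → r ≤ n + k → x r m ≠ 0 := fun r m h1 h2 =>
      hξne r h1 h2 _ (inv_ne_zero (hqz _))
    set p : ℕ → ℂ := fun m => -((x (n + k) m)⁻¹ * (x (n + k - 1) m)⁻¹) with hp
    have hxp : ∀ r m, 1 ≤ r → r ≤ n + k → x r m * p m * ξ r (q ^ m * z) = 1 := by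
      intro r m h1 h2
      have h := hrel r h1 h2 (q ^ m * z) (hqz m)
      rw [← mul_assoc, ← pow_succ'] at h
      have ha := hxne (n + k) m (by omega) le_rfl
      have hb := hxne (n + k - 1) m (by omega) (by omega)
      change ξ r (q ^ m * z) * x r m = -(x (n + k) m * x (n + k - 1) m) at h
      calc x r m * p m * ξ r (q ^ m * z) = p m * (ξ r (q ^ m * z) * x r m) := by ring
        _ = 1 := by rw [h, hp]; field_simp
    set A : Matrix (Fin k) (Fin k) ℂ := Matrix.of fun r c : Fin k =>
      (∏ t ∈ Finset.range c.val, ξ (n + r.val + 1) (q ^ (k - 2 - t) * z)) *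
        s (n + r.val + 1) (q ^ (k - 1 - c.val) * z) with hA
    have hmat : (Matrix.of fun r c : Fin k =>
      (∏ t ∈ Finset.range c.val, ξ (n + r.val + 1) (q ^ (k - 2 - t) * (q ^ (k - 1) * z)⁻¹)) *
        s (n + r.val + 1) (q ^ (k - 1 - c.val) * (q ^ (k - 1) * z)⁻¹)) =
        Matrix.of fun r c : Fin k => (∏ m ∈ Finset.range (k - 1), x (n + r.val + 1) m) *
          (Matrix.of fun r c : Fin k => (∏ i ∈ Finset.range (k - 1 - c.val), p (c.val + i)) *
            (A.submatrix id Fin.revPerm) r c) r c := by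
      ext r c
      have hr := r.2
      have hc := c.2
      simp only [Matrix.of_apply, Matrix.submatrix_apply, id, Fin.revPerm_apply, hA, Fin.val_rev]
      rw [hpt c.val (by omega), hs _ (by omega) (by omega) _ (hqz _)]
      have e1 : ∏ t ∈ Finset.range c.val, ξ (n + r.val + 1) (q ^ (k - 2 - t) * (q ^ (k - 1) * z)⁻¹)
          = ∏ m ∈ Finset.range c.val, x (n + r.val + 1) m := by
        refine Finset.prod_congr rfl fun t ht => ?_
        have := Finset.mem_range.1 ht
        rw [show k - 2 - t = k - 1 - (t + 1) by omega, hpt (t + 1) (by omega)]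
      have e2 : ∏ t ∈ Finset.range (k - (c.val + 1)), ξ (n + r.val + 1) (q ^ (k - 2 - t) * z)
          = ∏ i ∈ Finset.range (k - 1 - c.val), ξ (n + r.val + 1) (q ^ (c.val + i) * z) := by
        rw [show k - (c.val + 1) = k - 1 - c.val by omega, ← Finset.prod_range_reflect]
        refine Finset.prod_congr rfl fun t ht => ?_
        have := Finset.mem_range.1 ht
        congr 3
        omega
      have e3 : ∏ m ∈ Finset.range (k - 1), x (n + r.val + 1) m =
          (∏ m ∈ Finset.range c.val, x (n + r.val + 1) m) *
            ∏ i ∈ Finset.range (k - 1 - c.val), x (n + r.val + 1) (c.val + i) := by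
        rw [← Finset.prod_range_add]
        congr 2
        omega
      have e4 : (∏ i ∈ Finset.range (k - 1 - c.val), x (n + r.val + 1) (c.val + i)) *
          (∏ i ∈ Finset.range (k - 1 - c.val), p (c.val + i)) *
          (∏ i ∈ Finset.range (k - 1 - c.val), ξ (n + r.val + 1) (q ^ (c.val + i) * z)) = 1 := by
        rw [← Finset.prod_mul_distrib, ← Finset.prod_mul_distrib]
        exact Finset.prod_eq_one fun i _ => hxp _ _ (by omega) (by omega)
      rw [e1, e2, e3, show k - 1 - (k - (c.val + 1)) = c.val by omega]
      linear_combination (-(∏ m ∈ Finset.range c.val, x (n + r.val + 1) m) *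
        s (n + r.val + 1) (q ^ c.val * z)) * e4
    rw [hmat, Matrix.det_mul_column, Matrix.det_mul_row, Matrix.det_permute', aux_sign_rev]
    have f1 : ∏ r : Fin k, ∏ m ∈ Finset.range (k - 1), x (n + r.val + 1) m =
        ∏ j ∈ Finset.range (k - 1), ∏ i ∈ Finset.range k, x (n + k - i) j := by
      rw [Finset.prod_comm]
      refine Finset.prod_congr rfl fun j _ => ?_
      rw [Fin.prod_univ_eq_prod_range (fun r => x (n + r + 1) j), ← Finset.prod_range_reflect]
      refine Finset.prod_congr rfl fun t ht => ?_
      have := Finset.mem_range.1 ht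
      congr 1
      omega
    have f2 : ∏ c : Fin k, ∏ i ∈ Finset.range (k - 1 - c.val), p (c.val + i) =
        ∏ j ∈ Finset.range (k - 1), ∏ i ∈ Finset.range (k - 1 - j), p (j + i) := by
      rw [Fin.prod_univ_eq_prod_range (fun c => ∏ i ∈ Finset.range (k - 1 - c), p (c + i))]
      obtain ⟨l, rfl⟩ : ∃ l, k = l + 1 := ⟨k - 1, by omega⟩
      rw [Finset.prod_range_succ]
      simp
    have f3 : Ck (n + k) q ξ k z = (-1 : ℂ) ^ (k * (k - 1) / 2) *
        ((∏ j ∈ Finset.range (k - 1), ∏ i ∈ Finset.range k, x (n + k - i) j) *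
        ∏ j ∈ Finset.range (k - 1), ∏ i ∈ Finset.range (k - 1 - j), p (j + i)) := by
      rw [← Finset.prod_mul_distrib]
      unfold Ck
      simp only [hp, hx, add_right_comm]
    rw [f1, f2, f3]
    push_cast
    ring
  intro k hk hkN z hz
  refine ⟨key k hk hkN z hz, fun hC w hw => ?_⟩
  rw [key k hk hkN w hw, hC w hw, one_mul]
end

section
/- Let ε ∈ ℂ and let φ₁, φ₂, Q₊, Q₋, Λ : ℂ → ℂ be functions such that for every z ∈ ℂ: (i) the additive QQ-relation φ₂(z)Q₊(z)Q₋(z+ε) − φ₁(z)Q₋(z)Q₊(z+ε) = Λ(z) holds; (ii) Q₊(−z) = Q₊(z) and Q₋(−z) = Q₋(z); (iii) φ₁(−z−ε) = −φ₂(z) and φ₂(−z−ε) = −φ₁(z). Then for every z ∈ ℂ: Λ(−z−ε) = Λ(z), and the diagonal matrix A(z) = diag(φ₁(z), φ₂(z)) satisfies A(−z−ε)·A(z) = −φ₁(−z−ε)φ₂(−z−ε)·I₂ = −det A(−z−ε)·I₂. -/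
open Matrix

/-- reflection invariance for generalized Z-twisted Miura (GL(2),ε)-opers.
If the additive QQ-relation holds, the Q's are even and the twists satisfy the reflection
conditions, then `Λ(−z−ε) = Λ(z)` and
`A(−z−ε)·A(z) = −φ₁(−z−ε)φ₂(−z−ε)·I₂ = −det A(−z−ε)·I₂`. -/
theorem stmt_16 (ε : ℂ) (φ₁ φ₂ Qp Qm Lam : ℂ → ℂ)
    (hQQ : ∀ z : ℂ, φ₂ z * Qp z * Qm (z + ε) - φ₁ z * Qm z * Qp (z + ε) = Lam z)
    (hQp : ∀ z : ℂ, Qp (-z) = Qp z) (hQm : ∀ z : ℂ, Qm (-z) = Qm z)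
    (hφ₁ : ∀ z : ℂ, φ₁ (-z - ε) = -φ₂ z) (hφ₂ : ∀ z : ℂ, φ₂ (-z - ε) = -φ₁ z) :
    ∀ z : ℂ,
      Lam (-z - ε) = Lam z ∧
      !![φ₁ (-z - ε), 0; 0, φ₂ (-z - ε)] * !![φ₁ z, 0; 0, φ₂ z] =
        (-(φ₁ (-z - ε) * φ₂ (-z - ε))) • (1 : Matrix (Fin 2) (Fin 2) ℂ) ∧
      -(φ₁ (-z - ε) * φ₂ (-z - ε)) = -(!![φ₁ (-z - ε), 0; 0, φ₂ (-z - ε)]).det := by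
  intro z
  refine ⟨?_, ?_, ?_⟩
  · have h1 : Qp (-z - ε) = Qp (z + ε) := by
      rw [← hQp (z + ε)]; congr 1; ring
    have h2 : Qm (-z - ε) = Qm (z + ε) := by
      rw [← hQm (z + ε)]; congr 1; ring
    have h3 : -z - ε + ε = -z := by ring
    rw [← hQQ (-z - ε), ← hQQ z, h3, h1, h2, hQp, hQm, hφ₁, hφ₂]
    ring
  · rw [hφ₁, hφ₂]
    ext i j
    fin_cases i <;> fin_cases j <;> simp [Matrix.mul_apply, Fin.sum_univ_two] <;> ring
  · rw [Matrix.det_fin_two_of]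
    ring
end

section
/- Let p ∈ ℂ be nonzero (the quantum parameter of Vlaar–Weston), let y₁, …, y_k, t₁, …, tₙ, ξ, ξ̃ ∈ ℂ be nonzero, and fix 1 ≤ i ≤ k. Define q := p⁻², s_j := p·y_j² for 1 ≤ j ≤ k, a_l := t_l² for 1 ≤ l ≤ n, μ := p·ξ, μ̃ := p·ξ̃. Assume every factor occurring in a denominator below is nonzero. Then the Vlaar–Weston Bethe equation ((1−ξ̃ y_i²)/(ξ̃−p² y_i²)) · ((1−ξ y_i²)/(ξ−p² y_i²)) · ((1−p²)(p⁻²−p² y_i⁴))/((1−p⁻²)(1−y_i⁴)) · ∏_{j=1}^{k} (p²(1−p⁻² y_i² y_j⁻²)(1−y_i² y_j²))/((1−p² y_i² y_j⁻²)(p⁻²−p² y_i² y_j²)) · ∏_{l=1}^{n} ((1−p² y_i² t_l²)(1−p² y_i² t_l⁻²))/(p²(1−y_i² t_l²)(1−y_i² t_l⁻²)) = 1 holds if and only if −((s_i²−q)/(q s_i²−1)) · ((μ q s_i−1)(μ̃ q s_i−1))/((s_i−μ q)(s_i−μ̃ q)) · ∏_{j=1}^{k} ((q s_i−s_j)(q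 s_i s_j−1))/((s_i−q s_j)(s_i s_j−q)) · ∏_{l=1}^{n} ((p⁻¹ a_l−s_i)(a_l s_i−p⁻¹))/((a_l−p⁻¹ s_i)(p⁻¹ a_l s_i−1)) = 1. -/
/-- under the substitution `q = p⁻²`, `s_j = p·y_j²`, `a_l = t_l²`,
`μ = p·ξ`, `μ̃ = p·ξ̃`, the Vlaar–Weston Bethe equation for the open XXZ chain with
diagonal boundary conditions is equivalent to the q-oper Bethe equation. -/
theorem stmt_17 (p : ℂ) (hp : p ≠ 0) (k n : ℕ)
    (y : Fin k → ℂ) (t : Fin n → ℂ) (xi xit : ℂ)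
    (hy : ∀ j, y j ≠ 0) (ht : ∀ l, t l ≠ 0) (hxi : xi ≠ 0) (hxit : xit ≠ 0)
    (i : Fin k)
    (q : ℂ) (hq : q = (p ^ 2)⁻¹)
    (s : Fin k → ℂ) (hs : ∀ j, s j = p * y j ^ 2)
    (a : Fin n → ℂ) (ha : ∀ l, a l = t l ^ 2)
    (μ μt : ℂ) (hμ : μ = p * xi) (hμt : μt = p * xit)
    (d1 : xit - p ^ 2 * y i ^ 2 ≠ 0) (d2 : xi - p ^ 2 * y i ^ 2 ≠ 0)
    (d3 : 1 - (p ^ 2)⁻¹ ≠ 0) (d4 : 1 - y i ^ 4 ≠ 0)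
    (d5 : ∀ j, 1 - p ^ 2 * y i ^ 2 * (y j ^ 2)⁻¹ ≠ 0)
    (d6 : ∀ j, (p ^ 2)⁻¹ - p ^ 2 * y i ^ 2 * y j ^ 2 ≠ 0)
    (d7 : ∀ l, 1 - y i ^ 2 * t l ^ 2 ≠ 0) (d8 : ∀ l, 1 - y i ^ 2 * (t l ^ 2)⁻¹ ≠ 0)
    (d9 : q * s i ^ 2 - 1 ≠ 0) (d10 : s i - μ * q ≠ 0) (d11 : s i - μt * q ≠ 0)
    (d12 : ∀ j, s i - q * s j ≠ 0) (d13 : ∀ j, s i * s j - q ≠ 0)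
    (d14 : ∀ l, a l - p⁻¹ * s i ≠ 0) (d15 : ∀ l, p⁻¹ * a l * s i - 1 ≠ 0) :
    ((1 - xit * y i ^ 2) / (xit - p ^ 2 * y i ^ 2) *
        ((1 - xi * y i ^ 2) / (xi - p ^ 2 * y i ^ 2)) *
        ((1 - p ^ 2) * ((p ^ 2)⁻¹ - p ^ 2 * y i ^ 4) /
          ((1 - (p ^ 2)⁻¹) * (1 - y i ^ 4))) *
        (∏ j, p ^ 2 * (1 - (p ^ 2)⁻¹ * y i ^ 2 * (y j ^ 2)⁻¹) * (1 - y i ^ 2 * y j ^ 2) /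
          ((1 - p ^ 2 * y i ^ 2 * (y j ^ 2)⁻¹) * ((p ^ 2)⁻¹ - p ^ 2 * y i ^ 2 * y j ^ 2))) *
        (∏ l, (1 - p ^ 2 * y i ^ 2 * t l ^ 2) * (1 - p ^ 2 * y i ^ 2 * (t l ^ 2)⁻¹) /
          (p ^ 2 * (1 - y i ^ 2 * t l ^ 2) * (1 - y i ^ 2 * (t l ^ 2)⁻¹))) = 1) ↔
    (-((s i ^ 2 - q) / (q * s i ^ 2 - 1)) *
        ((μ * q * s i - 1) * (μt * q * s i - 1) / ((s i - μ * q) * (s i - μt * q))) *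
        (∏ j, (q * s i - s j) * (q * s i * s j - 1) /
          ((s i - q * s j) * (s i * s j - q))) *
        (∏ l, (p⁻¹ * a l - s i) * (a l * s i - p⁻¹) /
          ((a l - p⁻¹ * s i) * (p⁻¹ * a l * s i - 1))) = 1) := by
  have hsub : ∀ A B : ℂ, A = B → (A = 1 ↔ B = 1) := fun A B h => by rw [h]
  apply hsub
  have hP : p ^ 2 ≠ 0 := pow_ne_zero 2 hp
  have hj : ∀ j, p ^ 2 * (1 - (p ^ 2)⁻¹ * y i ^ 2 * (y j ^ 2)⁻¹) * (1 - y i ^ 2 * y j ^ 2) /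
          ((1 - p ^ 2 * y i ^ 2 * (y j ^ 2)⁻¹) * ((p ^ 2)⁻¹ - p ^ 2 * y i ^ 2 * y j ^ 2)) =
      (q * s i - s j) * (q * s i * s j - 1) / ((s i - q * s j) * (s i * s j - q)) := by
    intro j
    rw [div_eq_div_iff (mul_ne_zero (d5 j) (d6 j)) (mul_ne_zero (d12 j) (d13 j))]
    have := hy j
    rw [hs i, hs j, hq]
    field_simp
    ring
  have hl : ∀ l, (1 - p ^ 2 * y i ^ 2 * t l ^ 2) * (1 - p ^ 2 * y i ^ 2 * (t l ^ 2)⁻¹) /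
          (p ^ 2 * (1 - y i ^ 2 * t l ^ 2) * (1 - y i ^ 2 * (t l ^ 2)⁻¹)) =
      (p⁻¹ * a l - s i) * (a l * s i - p⁻¹) /
          ((a l - p⁻¹ * s i) * (p⁻¹ * a l * s i - 1)) := by
    intro l
    rw [div_eq_div_iff (mul_ne_zero (mul_ne_zero hP (d7 l)) (d8 l))
      (mul_ne_zero (d14 l) (d15 l))]
    have := ht l
    rw [hs i, ha l]
    field_simp
    ring
  rw [Finset.prod_congr rfl (fun j _ => hj j), Finset.prod_congr rfl (fun l _ => hl l)]
  congr 2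
  rw [div_mul_div_comm, div_mul_div_comm, ← neg_div, div_mul_div_comm,
    div_eq_div_iff (mul_ne_zero (mul_ne_zero d1 d2) (mul_ne_zero d3 d4))
      (mul_ne_zero d9 (mul_ne_zero d10 d11))]
  rw [hs i, hq, hμ, hμt]
  field_simp
  ring
end
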